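/- The maximum loss $M^{H,-}_t$ of standard fractional Brownian motion satisfies the logarithmic tail asymptotic $\lim_{x\to\infty} \frac{1}{x^2}\log P(M^{H,-}_t > x) = -\frac{1}{2t^{2H}}$. -/

import Mathlib

open MeasureTheory ProbabilityTheory Real Set Filter

/-- A (standard) fractional Brownian motion with Hurst parameter `H`:
a continuous centered Gaussian process started at `0` with the fBm covariance. -/
structure IsFBM {Ω : Type*} [MeasurableSpace Ω] (P : Measure Ω) (H : ℝ)
    (B : ℝ → Ω → ℝ) : Prop where
  measurable : ∀ t, Measurable (B t)
  gaussian : ∀ (n : ℕ) (t : Fin n → ℝ) (c : Fin n → ℝ),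
    ∃ v : NNReal, P.map (fun ω => ∑ i, c i * B (t i) ω) = gaussianReal 0 v
  zero : ∀ ω, B 0 ω = 0
  cov : ∀ s t : ℝ, 0 ≤ s → 0 ≤ t →
    ∫ ω, B s ω * B t ω ∂P = (s ^ (2*H) + t ^ (2*H) - |t - s| ^ (2*H)) / 2
  cont : ∀ ω, Continuous fun t => B t ω

/-- Running supremum `S_a = sup_{0 ≤ v ≤ a} B_v`. -/
noncomputable def fbmSup {Ω : Type*} (B : ℝ → Ω → ℝ) (a : ℝ) (ω : Ω) : ℝ :=
  sSup ((fun v => B v ω) '' Set.Icc 0 a)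

/-- Running infimum `I_a = inf_{0 ≤ v ≤ a} B_v`. -/
noncomputable def fbmInf {Ω : Type*} (B : ℝ → Ω → ℝ) (a : ℝ) (ω : Ω) : ℝ :=
  sInf ((fun v => B v ω) '' Set.Icc 0 a)

/-- Maximum loss `M_a = sup_{0 ≤ u ≤ v ≤ a} (B_u - B_v)`. -/
noncomputable def fbmMaxLoss {Ω : Type*} (B : ℝ → Ω → ℝ) (a : ℝ) (ω : Ω) : ℝ :=
  sSup {x | ∃ u v : ℝ, 0 ≤ u ∧ u ≤ v ∧ v ≤ a ∧ x = B u ω - B v ω}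

/-!
The limit amounts to `P (M_t > x) = O (exp (-b x ^ 2))` for all `b < 1 / (2 t ^ (2 H))`, and to the
reverse bound for all larger `b`. The latter holds because `M_t ≥ B_0 - B_t`, whose variance is
`t ^ (2 H)`. For the former, restrict `u` and `v` to a finite grid of mesh `δ`: each increment then
has variance at most `t ^ (2 H)`, and there are only finitely many of them. Between grid points,
dyadic chaining gives a Gaussian tail whose rate tends to infinity as `δ → 0`, so for small `δ` a
small proportion of `x` suffices for the oscillation. This replaces Borell's inequality.
-/

open Asymptotics
open scoped NNReal Topology

section LogAsymptotics

variable {ι : Type*} {l : Filter ι}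

lemma eventually_log_le_log_add_of_isBigO {f g φ : ι → ℝ} (hfg : f =O[l] g)
    (hf : ∀ᶠ x in l, f x ≠ 0) (hφ : Tendsto φ l atTop) :
    ∀ᶠ x in l, log (f x) ≤ log (g x) + φ x := by
  obtain ⟨C, hC, hbound⟩ := hfg.exists_pos
  filter_upwards [hbound.bound, hf, hφ.eventually_ge_atTop (log C)] with x hx hfx hCx
  have hgx : g x ≠ 0 := by
    intro h
    rw [h, norm_zero, mul_zero, norm_le_zero_iff] at hx
    exact hfx hx
  rw [norm_eq_abs, norm_eq_abs] at hx
  calc log (f x) = log |f x| := (log_abs _).symm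
    _ ≤ log (C * |g x|) := log_le_log (abs_pos.2 hfx) hx
    _ = log C + log (g x) := by rw [log_mul hC.ne' (abs_pos.2 hgx).ne', log_abs]
    _ ≤ log (g x) + φ x := by linarith

lemma tendsto_log_div_sq_of_isBigO {p : ℝ → ℝ} {a : ℝ}
    (hlower : ∀ b > a, (fun x => exp (-b * x ^ 2)) =O[atTop] p)
    (hupper : ∀ b < a, p =O[atTop] fun x => exp (-b * x ^ 2)) :
    Tendsto (fun x => 1 / x ^ 2 * log (p x)) atTop (𝓝 (-a)) := by
  have hsq {ε : ℝ} (hε : 0 < ε) : Tendsto (fun x : ℝ => ε * x ^ 2) atTop atTop :=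
    (tendsto_pow_atTop two_ne_zero).const_mul_atTop hε
  have hp : ∀ᶠ x in atTop, p x ≠ 0 := by
    filter_upwards [(hlower (a + 1) (lt_add_one a)).eq_zero_imp] with x hx h
    exact (exp_pos _).ne' (hx h)
  refine tendsto_order.2 ⟨fun c hc => ?_, fun c hc => ?_⟩
  · obtain ⟨b, hab, hbc⟩ := exists_between (lt_neg_of_lt_neg hc)
    obtain ⟨d, hbd, hdc⟩ := exists_between hbc
    filter_upwards [eventually_log_le_log_add_of_isBigO (hlower b hab)
      (.of_forall fun x => (exp_pos _).ne') (hsq (sub_pos.2 hbd)), eventually_gt_atTop 0]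
      with x hx hx0
    rw [log_exp] at hx
    rw [one_div, inv_mul_eq_div, lt_div_iff₀ (by positivity)]
    nlinarith [pow_pos hx0 2]
  · obtain ⟨b, hcb, hba⟩ := exists_between (neg_lt_of_neg_lt hc)
    obtain ⟨d, hcd, hdb⟩ := exists_between hcb
    filter_upwards [eventually_log_le_log_add_of_isBigO (hupper b hba) hp (hsq (sub_pos.2 hdb)),
      eventually_gt_atTop 0] with x hx hx0
    rw [log_exp] at hx
    rw [one_div, inv_mul_eq_div, div_lt_iff₀ (by positivity)]
    nlinarith [pow_pos hx0 2]

lemma isBigO_exp_neg_mul_sq_comp_mul {p : ℝ → ℝ} {b c r : ℝ}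
    (hp : p =O[atTop] fun x => exp (-c * x ^ 2)) (hr : 0 < r) (hbc : b ≤ c * r ^ 2) :
    (fun x => p (r * x)) =O[atTop] fun x => exp (-b * x ^ 2) := by
  refine (hp.comp_tendsto (tendsto_id.const_mul_atTop hr)).trans (IsBigO.of_norm_le fun x => ?_)
  rw [Function.comp_apply, norm_of_nonneg (exp_pos _).le, id_eq, mul_pow, ← mul_assoc, neg_mul c]
  gcongr

end LogAsymptotics

section GaussianTail

lemma isBigO_exp_neg_mul_sq_gaussianReal_Ioi {v : ℝ≥0} (hv : v ≠ 0) {b : ℝ}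
    (hb : 1 / (2 * v) < b) :
    (fun x => exp (-b * x ^ 2)) =O[atTop] fun x => (gaussianReal 0 v).real (Ioi x) := by
  have hv' : (0 : ℝ) < v := NNReal.coe_pos.2 (pos_iff_ne_zero.2 hv)
  rw [div_lt_iff₀ (by positivity)] at hb
  obtain ⟨r, hr, hr_sq⟩ : ∃ r > 1, r ^ 2 = b * (2 * v) :=
    ⟨√(b * (2 * v)), by rwa [gt_iff_lt, lt_sqrt zero_le_one, one_pow], sq_sqrt (by linarith)⟩
  have hpdf (x : ℝ) : gaussianPDFReal 0 v (r * x) = (√(2 * π * v))⁻¹ * exp (-b * x ^ 2) := by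
    rw [gaussianPDFReal, sub_zero, mul_pow, hr_sq]
    congr 2
    field_simp
  refine IsBigO.of_bound (√(2 * π * v)) ?_
  filter_upwards [eventually_gt_atTop 0, eventually_ge_atTop (1 / (r - 1))] with x hx hrx
  rw [div_le_iff₀ (by linarith)] at hrx
  rw [norm_of_nonneg (exp_pos _).le, norm_of_nonneg measureReal_nonneg,
    ← inv_mul_le_iff₀ (by positivity), ← hpdf]
  calc gaussianPDFReal 0 v (r * x)
      ≤ (r * x - x) * gaussianPDFReal 0 v (r * x) :=
        le_mul_of_one_le_left (gaussianPDFReal_nonneg _ _ _) (by linarith)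
    _ = ∫ _ in Ioc x (r * x), gaussianPDFReal 0 v (r * x) := by
        rw [setIntegral_const, Real.volume_real_Ioc_of_le (by nlinarith), smul_eq_mul]
    _ ≤ ∫ y in Ioc x (r * x), gaussianPDFReal 0 v y := by
        refine setIntegral_mono_on (integrableOn_const (by simp))
          (integrable_gaussianPDFReal _ _).integrableOn measurableSet_Ioc fun y hy => ?_
        have hy0 : 0 < y := hx.trans hy.1
        simp only [gaussianPDFReal, sub_zero]
        gcongr
        exact hy.2
    _ = (gaussianReal 0 v).real (Ioc x (r * x)) := by
        rw [measureReal_def, gaussianReal_apply_eq_integral _ hv,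
          ENNReal.toReal_ofReal (integral_nonneg fun _ => gaussianPDFReal_nonneg _ _ _)]
    _ ≤ (gaussianReal 0 v).real (Ioi x) := measureReal_mono Ioc_subset_Ioi_self

end GaussianTail

section SubgaussianTail

variable {Ω : Type*} [MeasurableSpace Ω] {P : Measure Ω} {Y : Ω → ℝ} {c d : ℝ≥0}

lemma hasSubgaussianMGF_of_map_eq_gaussianReal {v : ℝ≥0} (hY : AEMeasurable Y P)
    (h : P.map Y = gaussianReal 0 v) : HasSubgaussianMGF Y v P where
  integrable_exp_mul s := by
    have hintegrable := integrable_exp_mul_gaussianReal (μ := 0) (v := v) s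
    rw [← h] at hintegrable
    exact hintegrable.comp_aemeasurable hY
  mgf_le s := by rw [mgf_gaussianReal h, zero_mul, zero_add]

lemma hasSubgaussianMGF_mono (h : HasSubgaussianMGF Y c P) (hcd : c ≤ d) :
    HasSubgaussianMGF Y d P where
  integrable_exp_mul := h.integrable_exp_mul
  mgf_le s := (h.mgf_le s).trans <| by gcongr

lemma measureReal_le_abs_le_two_mul_exp (h : HasSubgaussianMGF Y c P) {y : ℝ} (hy : 0 ≤ y) :
    P.real {ω | y ≤ |Y ω|} ≤ 2 * exp (-y ^ 2 / (2 * c)) := by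
  have hsplit : {ω | y ≤ |Y ω|} = {ω | y ≤ Y ω} ∪ {ω | y ≤ (-Y) ω} := by
    ext ω
    exact le_abs (a := y) (b := Y ω)
  calc P.real {ω | y ≤ |Y ω|}
      ≤ P.real {ω | y ≤ Y ω} + P.real {ω | y ≤ (-Y) ω} := by
        rw [hsplit]
        exact measureReal_union_le _ _
    _ ≤ exp (-y ^ 2 / (2 * c)) + exp (-y ^ 2 / (2 * c)) :=
        add_le_add (h.measure_ge_le hy) (h.neg.measure_ge_le hy)
    _ = 2 * exp (-y ^ 2 / (2 * c)) := (two_mul _).symm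

lemma measureReal_iUnion_le_of_hasSum [IsFiniteMeasure P] {ι : Type*} [Countable ι]
    {s : ι → Set Ω} {f : ι → ℝ} {a : ℝ} (hs : ∀ i, P.real (s i) ≤ f i) (hf : HasSum f a) :
    P.real (⋃ i, s i) ≤ a := by
  have hf0 (i : ι) : 0 ≤ f i := measureReal_nonneg.trans (hs i)
  refine ENNReal.toReal_le_of_le_ofReal (hf.nonneg hf0) ?_
  calc P (⋃ i, s i) ≤ ∑' i, P (s i) := measure_iUnion_le _
    _ ≤ ∑' i, ENNReal.ofReal (f i) := ENNReal.tsum_le_tsum fun i => by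
        rw [← ofReal_measureReal]
        exact ENNReal.ofReal_le_ofReal (hs i)
    _ = ENNReal.ofReal a := by rw [← ENNReal.ofReal_tsum_of_nonneg hf0 hf.summable, hf.tsum_eq]

end SubgaussianTail

section Chaining

lemma dist_dyadic_le_sum {E : Type*} [PseudoMetricSpace E] {f : ℝ≥0 → E} {w : ℕ → ℝ}
    (h : ∀ n, ∀ k : ℕ, k < 2 ^ n → dist (f ((k + 1 : ℕ) / 2 ^ n)) (f (k / 2 ^ n)) ≤ w n) (n : ℕ) :
    ∀ k : ℕ, k ≤ 2 ^ n → dist (f (k / 2 ^ n)) (f 0) ≤ ∑ j ∈ Finset.range (n + 1), w j := by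
  have hw (n : ℕ) : 0 ≤ w n := dist_nonneg.trans (h n 0 (by positivity))
  induction n with
  | zero =>
    intro k hk
    obtain rfl | rfl : k = 0 ∨ k = 1 := by simp at hk; omega
    · simpa using hw 0
    · simpa using h 0 0 (by simp)
  | succ n ih =>
    intro k hk
    rw [pow_succ] at hk
    have hparent : ((2 * (k / 2) : ℕ) : ℝ≥0) / 2 ^ (n + 1) = (k / 2 : ℕ) / 2 ^ n := by
      rw [pow_succ]
      push_cast
      field_simp
    have hstep : dist (f (k / 2 ^ (n + 1))) (f ((k / 2 : ℕ) / 2 ^ n)) ≤ w (n + 1) := by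
      rw [← hparent]
      obtain hk2 | hk2 : k = 2 * (k / 2) ∨ k = 2 * (k / 2) + 1 := by omega
      · rw [← hk2, dist_self]
        exact hw _
      · have := h (n + 1) (2 * (k / 2)) (by rw [pow_succ]; omega)
        rwa [← hk2] at this
    calc dist (f (k / 2 ^ (n + 1))) (f 0)
        ≤ dist (f (k / 2 ^ (n + 1))) (f ((k / 2 : ℕ) / 2 ^ n))
          + dist (f ((k / 2 : ℕ) / 2 ^ n)) (f 0) := dist_triangle _ _ _
      _ ≤ w (n + 1) + ∑ j ∈ Finset.range (n + 1), w j := add_le_add hstep (ih _ (by omega))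
      _ = ∑ j ∈ Finset.range (n + 1 + 1), w j := by rw [Finset.sum_range_succ _ (n + 1), add_comm]

lemma tendsto_natFloor_mul_two_pow_div (s : ℝ≥0) :
    Tendsto (fun n : ℕ => (⌊(s : ℝ) * 2 ^ n⌋₊ / 2 ^ n : ℝ≥0)) atTop (𝓝 s) := by
  rw [← NNReal.tendsto_coe]
  push_cast
  exact (tendsto_nat_floor_mul_div_atTop s.coe_nonneg).comp
    (tendsto_pow_atTop_atTop_of_one_lt one_lt_two)

lemma dist_le_of_dyadic {E : Type*} [PseudoMetricSpace E] {f : ℝ≥0 → E} (hf : Continuous f)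
    {w : ℕ → ℝ} {a : ℝ} (hw : HasSum w a)
    (h : ∀ n, ∀ k : ℕ, k < 2 ^ n → dist (f ((k + 1 : ℕ) / 2 ^ n)) (f (k / 2 ^ n)) ≤ w n)
    {s : ℝ≥0} (hs : s ≤ 1) : dist (f s) (f 0) ≤ a := by
  have hlim := ((hf.tendsto s).comp (tendsto_natFloor_mul_two_pow_div s)).dist
    (tendsto_const_nhds (x := f 0))
  refine le_of_tendsto' hlim fun n => ?_
  calc dist (f (⌊(s : ℝ) * 2 ^ n⌋₊ / 2 ^ n)) (f 0)
      ≤ ∑ j ∈ Finset.range (n + 1), w j := by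
        refine dist_dyadic_le_sum h n _ (Nat.floor_le_of_le ?_)
        push_cast
        exact mul_le_of_le_one_left (by positivity) hs
    _ ≤ a := sum_le_hasSum _ (fun n _ => dist_nonneg.trans (h n 0 (by positivity))) hw

lemma two_pow_mul_exp_neg_mul_pow_le {q R : ℝ} (hR : 1 < R) (hq : log 4 ≤ q * (R - 1)) (n : ℕ) :
    2 ^ n * exp (-(q * R ^ n)) ≤ exp (-q) * (1 / 2) ^ n := by
  have hq0 : 0 ≤ q := by
    have : 0 ≤ q * (R - 1) := (log_nonneg (by norm_num)).trans hq
    exact nonneg_of_mul_nonneg_left this (by linarith)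
  have hbernoulli : 1 + n * (R - 1) ≤ R ^ n := by
    simpa using one_add_mul_le_pow (a := R - 1) (by linarith) n
  have hexponent : -(q * R ^ n) ≤ -q + n * -log 4 := by
    have h1 := mul_le_mul_of_nonneg_left hbernoulli hq0
    have h2 := mul_le_mul_of_nonneg_left hq n.cast_nonneg
    linarith
  calc 2 ^ n * exp (-(q * R ^ n)) ≤ 2 ^ n * exp (-q + n * -log 4) := by gcongr
    _ = exp (-q) * (1 / 2) ^ n := by
      rw [exp_add, exp_nat_mul, exp_neg (log 4), exp_log (by norm_num), mul_left_comm, ← mul_pow]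
      norm_num

end Chaining

section Grid

lemma exists_finset_forall_eq_add (T : ℝ≥0) {δ : ℝ≥0} (hδ : 0 < δ) :
    ∃ G : Finset ℝ≥0, (∀ g ∈ G, g ≤ T) ∧ ∀ u ≤ T, ∃ g ∈ G, ∃ s ≤ δ, u = g + s := by
  refine ⟨(Finset.range (⌊T / δ⌋₊ + 1)).image fun k : ℕ => k * δ, fun g hg => ?_, fun u hu => ?_⟩
  · obtain ⟨k, hk, rfl⟩ := Finset.mem_image.1 hg
    rw [← le_div_iff₀ hδ]
    exact (Nat.le_floor_iff (by positivity)).1 (Finset.mem_range_succ_iff.1 hk)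
  · refine ⟨⌊u / δ⌋₊ * δ, Finset.mem_image_of_mem _ ?_, u - ⌊u / δ⌋₊ * δ, ?_, ?_⟩
    · exact Finset.mem_range_succ_iff.2 (by gcongr)
    · have h := ((div_lt_iff₀ hδ).1 (Nat.lt_floor_add_one (u / δ))).le
      rwa [add_mul, one_mul, ← tsub_le_iff_left] at h
    · exact (add_tsub_cancel_of_le <|
        (le_div_iff₀ hδ).1 (Nat.floor_le (by positivity))).symm

lemma exists_grid_of_exists_lt_sub {f : ℝ≥0 → ℝ} {G : Set ℝ≥0} {T δ : ℝ≥0}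
    (hG : ∀ u ≤ T, ∃ g ∈ G, ∃ s ≤ δ, u = g + s) (θ : ℝ) {x : ℝ}
    (hx : ∃ u ≤ T, ∃ v ≤ T, x < f u - f v) :
    (∃ g ∈ G, ∃ g' ∈ G, θ * x ≤ f g - f g') ∨
      ∃ g ∈ G, ∃ s ≤ δ, (1 - θ) / 2 * x < |f (g + s) - f g| := by
  by_contra! hsmall
  obtain ⟨hgrid, hosc⟩ := hsmall
  obtain ⟨u, hu, v, hv, huv⟩ := hx
  obtain ⟨g, hg, s, hs, rfl⟩ := hG u hu
  obtain ⟨g', hg', s', hs', rfl⟩ := hG v hv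
  have h1 := (abs_le.1 (hosc g hg s hs)).2
  have h2 := (abs_le.1 (hosc g' hg' s' hs')).1
  have h3 := hgrid g hg g' hg'
  linarith

lemma exists_mem_Ioo_lt_mul_sq {a b : ℝ} (hb : b < a) :
    ∃ θ ∈ Ioo (0 : ℝ) 1, b < a * θ ^ 2 := by
  have hlim : Tendsto (fun θ : ℝ => a * θ ^ 2) (𝓝[<] 1) (𝓝 a) := by
    have hcont : Continuous fun θ : ℝ => a * θ ^ 2 := by fun_prop
    simpa using (hcont.tendsto 1).mono_left nhdsWithin_le_nhds
  exact ((eventually_mem_set.2 (Ioo_mem_nhdsLT one_pos)).and (hlim.eventually_const_lt hb)).exists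

end Grid

/-- The process `X` has sub-Gaussian increments with variance proxy `K |s - t| ^ α`. Time is indexed
by `ℝ≥0`, so that the condition concerns nonnegative times only. -/
def HasSubgaussianIncrements {Ω : Type*} [MeasurableSpace Ω] (X : ℝ≥0 → Ω → ℝ) (K : ℝ≥0) (α : ℝ)
    (P : Measure Ω) : Prop :=
  ∀ s t, HasSubgaussianMGF (fun ω => X s ω - X t ω) (K * nndist s t ^ α) P

/-- The ratio `2 ^ (-α / 4)` of the geometric weights which the chaining argument gives to the
successive dyadic levels. It is larger than the decay `2 ^ (-α / 2)` of the standard deviations of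
the dyadic increments, and smaller than `1`. -/
noncomputable def chainingRatio (α : ℝ) : ℝ := 2 ^ (-(α / 4))

/-- The constant `c` in the chaining bound `4 exp (-c x ^ 2 / K)` for the probability that a process
with variance proxy `K |s - t| ^ α` moves by more than `x` from its initial value during the unit
interval, valid for large `x`. -/
noncomputable def chainingRate (α : ℝ) : ℝ := (1 - chainingRatio α) ^ 2 / 2

section ChainingConstants

variable {α : ℝ}

lemma chainingRatio_pos : 0 < chainingRatio α := rpow_pos_of_pos two_pos _

lemma chainingRatio_lt_one (hα : 0 < α) : chainingRatio α < 1 :=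
  rpow_lt_one_of_one_lt_of_neg one_lt_two (by linarith)

lemma chainingRate_pos (hα : 0 < α) : 0 < chainingRate α :=
  div_pos (pow_pos (sub_pos.2 (chainingRatio_lt_one hα)) 2) two_pos

lemma inv_two_pow_rpow_eq_chainingRatio_pow (α : ℝ) (n : ℕ) :
    ((2 ^ n)⁻¹ : ℝ) ^ α = ((chainingRatio α ^ n) ^ 2) ^ 2 := by
  have h : chainingRatio α ^ 4 = 2 ^ (-α) := by
    rw [chainingRatio, ← rpow_mul_natCast two_pos.le]
    congr 1
    push_cast
    ring
  rw [inv_rpow (by positivity), ← rpow_neg (by positivity), ← rpow_natCast, ← rpow_mul two_pos.le,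
    mul_comm, rpow_mul two_pos.le, ← h, rpow_natCast]
  ring

lemma exists_pos_le_div_mul_rpow {c : ℝ} {K : ℝ≥0} (hc : 0 < c) (hK : 0 < K) (hα : 0 < α)
    (b : ℝ) : ∃ δ : ℝ≥0, 0 < δ ∧ b ≤ c / (K * δ ^ α : ℝ≥0) := by
  have hlim : Tendsto (fun δ : ℝ≥0 => ((K * δ ^ α : ℝ≥0) : ℝ)) (𝓝[>] 0) (𝓝[>] 0) := by
    refine tendsto_nhdsWithin_iff.2 ⟨?_, ?_⟩
    · have hcont : Continuous fun δ : ℝ≥0 => ((K * δ ^ α : ℝ≥0) : ℝ) := by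
        fun_prop (disch := exact hα.le)
      simpa [NNReal.zero_rpow hα.ne'] using (hcont.tendsto 0).mono_left nhdsWithin_le_nhds
    · filter_upwards [self_mem_nhdsWithin] with δ hδ
      exact mul_pos hK (NNReal.rpow_pos hδ)
  obtain ⟨δ, hδ, hb⟩ := ((hlim.inv_tendsto_nhdsGT_zero.const_mul_atTop hc).eventually_ge_atTop b
    |>.and self_mem_nhdsWithin).exists
  exact ⟨δ, hb, by simpa [div_eq_mul_inv] using hδ⟩

end ChainingConstants

namespace HasSubgaussianIncrements

variable {Ω : Type*} [MeasurableSpace Ω] {P : Measure Ω} {X : ℝ≥0 → Ω → ℝ} {K : ℝ≥0} {α : ℝ}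

lemma comp_add_mul (hX : HasSubgaussianIncrements X K α P) (a δ : ℝ≥0) :
    HasSubgaussianIncrements (fun s => X (a + δ * s)) (K * δ ^ α) α P := by
  intro s t
  have hdist : nndist (a + δ * s) (a + δ * t) = δ * nndist s t := by
    ext
    rw [NNReal.coe_mul, coe_nndist, coe_nndist, NNReal.dist_eq, NNReal.dist_eq]
    push_cast
    rw [add_sub_add_left_eq_sub, ← mul_sub, abs_mul, NNReal.abs_eq]
  have h := hX (a + δ * s) (a + δ * t)
  rwa [hdist, NNReal.mul_rpow, ← mul_assoc] at h

lemma measureReal_dyadic_increment_le (hX : HasSubgaussianIncrements X K α P) (hα : 0 < α) {x : ℝ}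
    (hx : 0 ≤ x) (n k : ℕ) :
    P.real {ω | (1 - chainingRatio α) * chainingRatio α ^ n * x
        ≤ |X ((k + 1 : ℕ) / 2 ^ n) ω - X (k / 2 ^ n) ω|}
      ≤ 2 * exp (-(chainingRate α / K * x ^ 2 * ((chainingRatio α ^ 2)⁻¹) ^ n)) := by
  have hr0 : 0 < chainingRatio α := chainingRatio_pos
  have hr1 : 0 ≤ 1 - chainingRatio α := (sub_pos.2 (chainingRatio_lt_one hα)).le
  have hdist : ((nndist ((k + 1 : ℕ) / 2 ^ n : ℝ≥0) (k / 2 ^ n) : ℝ≥0) : ℝ) = (2 ^ n)⁻¹ := by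
    rw [coe_nndist, NNReal.dist_eq]
    push_cast
    rw [add_div, add_sub_cancel_left, one_div, abs_of_pos (by positivity)]
  refine (measureReal_le_abs_le_two_mul_exp (hX _ _) (by positivity)).trans_eq ?_
  rw [NNReal.coe_mul, NNReal.coe_rpow, hdist, inv_two_pow_rpow_eq_chainingRatio_pow, chainingRate]
  congr 2
  rw [inv_pow, pow_right_comm _ 2 n]
  field_simp

lemma measureReal_exists_lt_abs_sub_le [IsFiniteMeasure P] (hX : HasSubgaussianIncrements X K α P)
    (hα : 0 < α) (hcont : ∀ ω, Continuous fun s => X s ω) {x : ℝ} (hx : 0 ≤ x)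
    (hxK : log 4 ≤ chainingRate α / K * x ^ 2 * ((chainingRatio α ^ 2)⁻¹ - 1)) :
    P.real {ω | ∃ s ≤ 1, x < |X s ω - X 0 ω|} ≤ 4 * exp (-(chainingRate α / K) * x ^ 2) := by
  set r := chainingRatio α
  set q := chainingRate α / K * x ^ 2
  have hr0 : 0 < r := chainingRatio_pos
  have hr1 : r < 1 := chainingRatio_lt_one hα
  set A : ℕ → ℕ → Set Ω := fun n k =>
    {ω | (1 - r) * r ^ n * x ≤ |X ((k + 1 : ℕ) / 2 ^ n) ω - X (k / 2 ^ n) ω|}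
  have hsub : {ω | ∃ s ≤ 1, x < |X s ω - X 0 ω|} ⊆ ⋃ n, ⋃ k ∈ Finset.range (2 ^ n), A n k := by
    rintro ω ⟨s, hs, hxs⟩
    by_contra hω
    simp only [A, mem_iUnion, Finset.mem_range, mem_ofPred_eq, not_exists, not_le] at hω
    have hw : HasSum (fun n => (1 - r) * r ^ n * x) x := by
      have h := ((hasSum_geometric_of_lt_one hr0.le hr1).mul_left (1 - r)).mul_right x
      rwa [mul_inv_cancel₀ (sub_pos.2 hr1).ne', one_mul] at h
    exact hxs.not_ge (dist_le_of_dyadic (hcont ω) hw (fun n k hk => (hω n k hk).le) hs)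
  have hlevel (n : ℕ) :
      P.real (⋃ k ∈ Finset.range (2 ^ n), A n k) ≤ 2 * exp (-q) * (1 / 2) ^ n := by
    calc P.real (⋃ k ∈ Finset.range (2 ^ n), A n k)
        ≤ ∑ k ∈ Finset.range (2 ^ n), P.real (A n k) := measureReal_biUnion_finset_le _ _
      _ ≤ ∑ _k ∈ Finset.range (2 ^ n), 2 * exp (-(q * ((r ^ 2)⁻¹) ^ n)) :=
          Finset.sum_le_sum fun k _ => hX.measureReal_dyadic_increment_le hα hx n k
      _ = 2 * (2 ^ n * exp (-(q * ((r ^ 2)⁻¹) ^ n))) := by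
          rw [Finset.sum_const, Finset.card_range, nsmul_eq_mul]
          push_cast
          ring
      _ ≤ 2 * (exp (-q) * (1 / 2) ^ n) := by
          refine mul_le_mul_of_nonneg_left (two_pow_mul_exp_neg_mul_pow_le ?_ hxK n) two_pos.le
          exact (one_lt_inv₀ (by positivity)).2 (pow_lt_one₀ hr0.le hr1 two_ne_zero)
      _ = 2 * exp (-q) * (1 / 2) ^ n := (mul_assoc _ _ _).symm
  calc P.real {ω | ∃ s ≤ 1, x < |X s ω - X 0 ω|}
      ≤ P.real (⋃ n, ⋃ k ∈ Finset.range (2 ^ n), A n k) := measureReal_mono hsub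
    _ ≤ 2 * exp (-q) * 2 :=
        measureReal_iUnion_le_of_hasSum hlevel (hasSum_geometric_two.mul_left _)
    _ = 4 * exp (-(chainingRate α / K) * x ^ 2) := by
        rw [neg_mul]
        ring

lemma isBigO_measureReal_exists_lt_abs_sub [IsFiniteMeasure P]
    (hX : HasSubgaussianIncrements X K α P) (hα : 0 < α) (hK : 0 < K)
    (hcont : ∀ ω, Continuous fun s => X s ω) (a : ℝ≥0) {δ : ℝ≥0} (hδ : 0 < δ) :
    (fun x => P.real {ω | ∃ s ≤ δ, x < |X (a + s) ω - X a ω|})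
      =O[atTop] fun x => exp (-(chainingRate α / (K * δ ^ α : ℝ≥0)) * x ^ 2) := by
  have hr : 1 < (chainingRatio α ^ 2)⁻¹ := (one_lt_inv₀ (pow_pos chainingRatio_pos 2)).2
    (pow_lt_one₀ chainingRatio_pos.le (chainingRatio_lt_one hα) two_ne_zero)
  have hKδ : 0 < K * δ ^ α := mul_pos hK (NNReal.rpow_pos hδ)
  have hlarge : Tendsto (fun x : ℝ => chainingRate α / (K * δ ^ α : ℝ≥0) * x ^ 2
      * ((chainingRatio α ^ 2)⁻¹ - 1)) atTop atTop :=
    ((tendsto_pow_atTop two_ne_zero).const_mul_atTop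
      (div_pos (chainingRate_pos hα) hKδ)).atTop_mul_const (sub_pos.2 hr)
  refine IsBigO.of_bound 4 ?_
  filter_upwards [hlarge.eventually_ge_atTop (log 4), eventually_ge_atTop 0] with x hx hx0
  rw [norm_of_nonneg measureReal_nonneg, norm_of_nonneg (exp_pos _).le]
  refine le_trans (measureReal_mono ?_) ((hX.comp_add_mul a δ).measureReal_exists_lt_abs_sub_le hα
    (fun ω => (hcont ω).comp (by fun_prop)) hx0 hx)
  rintro ω ⟨s, hs, hxs⟩
  refine ⟨s / δ, div_le_one_of_le₀ hs hδ.le, ?_⟩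
  rwa [mul_div_cancel₀ _ hδ.ne', mul_zero, add_zero]

lemma isBigO_measureReal_le_sub (hX : HasSubgaussianIncrements X K α P) (hα : 0 ≤ α)
    {s t T : ℝ≥0} (hs : s ≤ T) (ht : t ≤ T) :
    (fun x => P.real {ω | x ≤ X s ω - X t ω})
      =O[atTop] fun x => exp (-(1 / (2 * (K * T ^ α : ℝ≥0))) * x ^ 2) := by
  have hdist : nndist s t ≤ T := by
    rw [← NNReal.coe_le_coe, coe_nndist, NNReal.dist_eq]
    exact abs_sub_le_of_nonneg_of_le s.2 hs t.2 ht
  have hle : K * nndist s t ^ α ≤ K * T ^ α := by gcongr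
  refine IsBigO.of_bound 1 ?_
  filter_upwards [eventually_ge_atTop 0] with x hx
  rw [norm_of_nonneg measureReal_nonneg, norm_of_nonneg (exp_pos _).le, one_mul]
  refine ((hasSubgaussianMGF_mono (hX s t) hle).measure_ge_le hx).trans_eq ?_
  congr 1
  ring

theorem isBigO_measureReal_exists_lt_sub [IsFiniteMeasure P]
    (hX : HasSubgaussianIncrements X K α P) (hα : 0 < α) (hK : 0 < K)
    (hcont : ∀ ω, Continuous fun s => X s ω) {T : ℝ≥0} {b : ℝ}
    (hb : b < 1 / (2 * (K * T ^ α : ℝ≥0))) :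
    (fun x => P.real {ω | ∃ u ≤ T, ∃ v ≤ T, x < X u ω - X v ω})
      =O[atTop] fun x => exp (-b * x ^ 2) := by
  obtain ⟨θ, ⟨hθ0, hθ1⟩, hbθ⟩ := exists_mem_Ioo_lt_mul_sq hb
  have hη : 0 < (1 - θ) / 2 := by linarith
  obtain ⟨δ, hδ, hbδ⟩ := exists_pos_le_div_mul_rpow
    (mul_pos (chainingRate_pos hα) (pow_pos hη 2)) hK hα b
  obtain ⟨G, hGT, hG⟩ := exists_finset_forall_eq_add T hδ
  have hgrid : ∀ g ∈ G, ∀ g' ∈ G, (fun x => P.real {ω | θ * x ≤ X g ω - X g' ω})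
      =O[atTop] fun x => exp (-b * x ^ 2) := fun g hg g' hg' =>
    isBigO_exp_neg_mul_sq_comp_mul (hX.isBigO_measureReal_le_sub hα.le (hGT g hg) (hGT g' hg'))
      hθ0 hbθ.le
  have hosc : ∀ g ∈ G, (fun x => P.real {ω | ∃ s ≤ δ, (1 - θ) / 2 * x < |X (g + s) ω - X g ω|})
      =O[atTop] fun x => exp (-b * x ^ 2) := fun g _ =>
    isBigO_exp_neg_mul_sq_comp_mul (hX.isBigO_measureReal_exists_lt_abs_sub hα hK hcont g hδ)
      hη (by rwa [div_mul_eq_mul_div])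
  refine IsBigO.trans (IsBigO.of_norm_le fun x => ?_)
    ((IsBigO.fun_sum fun g hg => IsBigO.fun_sum (hgrid g hg)).add (IsBigO.fun_sum hosc))
  rw [norm_of_nonneg measureReal_nonneg]
  calc P.real {ω | ∃ u ≤ T, ∃ v ≤ T, x < X u ω - X v ω}
      ≤ P.real ((⋃ g ∈ G, ⋃ g' ∈ G, {ω | θ * x ≤ X g ω - X g' ω})
          ∪ ⋃ g ∈ G, {ω | ∃ s ≤ δ, (1 - θ) / 2 * x < |X (g + s) ω - X g ω|}) := by
        refine measureReal_mono fun ω hω => ?_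
        simp only [mem_union, mem_iUnion, mem_ofPred_eq, exists_prop]
        exact exists_grid_of_exists_lt_sub hG θ hω
    _ ≤ _ := (measureReal_union_le _ _).trans <| add_le_add
        ((measureReal_biUnion_finset_le _ _).trans <|
          Finset.sum_le_sum fun g _ => measureReal_biUnion_finset_le _ _)
        (measureReal_biUnion_finset_le _ _)

end HasSubgaussianIncrements

section MaxLoss

variable {Ω : Type*} {B : ℝ → Ω → ℝ}

lemma lt_fbmMaxLoss_iff {ω : Ω} (hcont : Continuous fun s => B s ω) {t x : ℝ} (ht : 0 ≤ t) :
    x < fbmMaxLoss B t ω ↔ ∃ u v, 0 ≤ u ∧ u ≤ v ∧ v ≤ t ∧ x < B u ω - B v ω := by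
  have hne : {y | ∃ u v : ℝ, 0 ≤ u ∧ u ≤ v ∧ v ≤ t ∧ y = B u ω - B v ω}.Nonempty :=
    ⟨_, 0, 0, le_rfl, le_rfl, ht, rfl⟩
  have hbdd : BddAbove {y | ∃ u v : ℝ, 0 ≤ u ∧ u ≤ v ∧ v ≤ t ∧ y = B u ω - B v ω} := by
    have hcompact : IsCompact (Icc 0 t ×ˢ Icc 0 t) := isCompact_Icc.prod isCompact_Icc
    refine (hcompact.bddAbove_image (f := fun z : ℝ × ℝ => B z.1 ω - B z.2 ω) ?_).mono ?_
    · exact ((hcont.comp continuous_fst).sub (hcont.comp continuous_snd)).continuousOn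
    · rintro y ⟨u, v, hu, huv, hvt, rfl⟩
      exact ⟨(u, v), ⟨⟨hu, huv.trans hvt⟩, hu.trans huv, hvt⟩, rfl⟩
  rw [fbmMaxLoss, lt_csSup_iff hbdd hne]
  constructor
  · rintro ⟨_, ⟨u, v, hu, huv, hvt, rfl⟩, hx⟩
    exact ⟨u, v, hu, huv, hvt, hx⟩
  · rintro ⟨u, v, hu, huv, hvt, hx⟩
    exact ⟨_, ⟨u, v, hu, huv, hvt, rfl⟩, hx⟩

end MaxLoss

namespace IsFBM

variable {Ω : Type*} [MeasurableSpace Ω] {P : Measure Ω} {H : ℝ} {B : ℝ → Ω → ℝ}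

lemma isProbabilityMeasure (hB : IsFBM P H B) : IsProbabilityMeasure P := by
  obtain ⟨v, hv⟩ := hB.gaussian 0 0 0
  have : IsProbabilityMeasure (P.map fun _ => (0 : ℝ)) := by
    simp only [Finset.univ_eq_empty, Finset.sum_empty] at hv
    rw [hv]
    infer_instance
  exact Measure.isProbabilityMeasure_of_map fun _ => (0 : ℝ)

lemma memLp_two (hB : IsFBM P H B) (s : ℝ) : MemLp (B s) 2 P := by
  obtain ⟨v, hv⟩ := hB.gaussian 1 (fun _ => s) (fun _ => 1)
  simp only [Fin.sum_univ_one, one_mul] at hv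
  have h : MemLp id 2 (P.map (B s)) := by
    rw [hv]
    exact memLp_id_gaussianReal' 2 (by simp)
  exact h.comp_of_map (hB.measurable s).aemeasurable

lemma integral_sub_sq (hB : IsFBM P H B) (hH : 0 < H) (s u : ℝ≥0) :
    ∫ ω, (B s ω - B u ω) ^ 2 ∂P = (nndist s u ^ (2 * H) : ℝ≥0) := by
  have hintegrable (a b : ℝ) : Integrable (fun ω => B a ω * B b ω) P :=
    (hB.memLp_two a).integrable_mul (hB.memLp_two b)
  have hadd : Integrable (fun ω => B s ω * B s ω + B u ω * B u ω) P :=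
    (hintegrable s s).add (hintegrable u u)
  calc ∫ ω, (B s ω - B u ω) ^ 2 ∂P
      = ∫ ω, (B s ω * B s ω + B u ω * B u ω - 2 * (B s ω * B u ω)) ∂P := by
        congr 1 with ω
        ring
    _ = ∫ ω, B s ω * B s ω ∂P + ∫ ω, B u ω * B u ω ∂P - 2 * ∫ ω, B s ω * B u ω ∂P := by
        rw [integral_sub hadd ((hintegrable s u).const_mul 2),
          integral_add (hintegrable s s) (hintegrable u u), integral_const_mul]
    _ = (nndist s u ^ (2 * H) : ℝ≥0) := by
        rw [hB.cov s s s.2 s.2, hB.cov u u u.2 u.2, hB.cov s u s.2 u.2, sub_self, sub_self,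
          abs_zero, zero_rpow (by positivity), NNReal.coe_rpow, coe_nndist, NNReal.dist_eq,
          abs_sub_comm (s : ℝ)]
        ring

lemma map_sub_eq_gaussianReal (hB : IsFBM P H B) (hH : 0 < H) (s u : ℝ≥0) :
    P.map (fun ω => B s ω - B u ω) = gaussianReal 0 (nndist s u ^ (2 * H)) := by
  obtain ⟨v, hv⟩ := hB.gaussian 2 ![s, u] ![1, -1]
  have hsum : (fun ω => ∑ i, (![1, -1] : Fin 2 → ℝ) i * B ((![s, u] : Fin 2 → ℝ) i) ω)
      = fun ω => B s ω - B u ω := by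
    funext ω
    simp [Fin.sum_univ_two, sub_eq_add_neg]
  rw [hsum] at hv
  have hmeas : Measurable fun ω => B s ω - B u ω := (hB.measurable s).sub (hB.measurable u)
  have hvar : (v : ℝ) = ∫ ω, (B s ω - B u ω) ^ 2 ∂P := by
    calc (v : ℝ) = ∫ y, y ^ 2 ∂(gaussianReal 0 v) := by
          rw [← variance_fun_id_gaussianReal (μ := 0) (v := v),
            variance_of_integral_eq_zero aemeasurable_id' integral_id_gaussianReal]
      _ = ∫ ω, (B s ω - B u ω) ^ 2 ∂P := by
          rw [← hv, integral_map hmeas.aemeasurable (by fun_prop)]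
  rw [hv, NNReal.coe_injective (hvar.trans (hB.integral_sub_sq hH s u))]

lemma hasSubgaussianIncrements (hB : IsFBM P H B) (hH : 0 < H) :
    HasSubgaussianIncrements (fun s : ℝ≥0 => B s) 1 (2 * H) P := fun s u => by
  rw [one_mul]
  exact hasSubgaussianMGF_of_map_eq_gaussianReal
    ((hB.measurable s).sub (hB.measurable u)).aemeasurable (hB.map_sub_eq_gaussianReal hH s u)

lemma isBigO_exp_neg_mul_sq_maxLoss (hB : IsFBM P H B) (hH : 0 < H) {t : ℝ≥0} (ht : 0 < t) {b : ℝ}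
    (hb : 1 / (2 * (t : ℝ) ^ (2 * H)) < b) :
    (fun x => exp (-b * x ^ 2)) =O[atTop] fun x => P.real {ω | x < fbmMaxLoss B t ω} := by
  have := hB.isProbabilityMeasure
  have hlaw : P.map (fun ω => B (0 : ℝ≥0) ω - B t ω) = gaussianReal 0 (t ^ (2 * H)) := by
    rw [hB.map_sub_eq_gaussianReal hH 0 t, NNReal.nndist_zero_eq_val]
  have hmeas : Measurable fun ω => B (0 : ℝ≥0) ω - B t ω :=
    (hB.measurable _).sub (hB.measurable _)
  rw [← NNReal.coe_rpow] at hb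
  refine (isBigO_exp_neg_mul_sq_gaussianReal_Ioi (NNReal.rpow_pos ht).ne' hb).trans
    (IsBigO.of_norm_le fun x => ?_)
  rw [norm_of_nonneg measureReal_nonneg, ← hlaw, map_measureReal_apply hmeas measurableSet_Ioi]
  exact measureReal_mono fun ω hω =>
    (lt_fbmMaxLoss_iff (hB.cont ω) t.2).2 ⟨_, _, le_rfl, t.2, le_rfl, hω⟩

lemma isBigO_maxLoss_exp_neg_mul_sq (hB : IsFBM P H B) (hH : 0 < H) {t : ℝ≥0} {b : ℝ}
    (hb : b < 1 / (2 * (t : ℝ) ^ (2 * H))) :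
    (fun x => P.real {ω | x < fbmMaxLoss B t ω}) =O[atTop] fun x => exp (-b * x ^ 2) := by
  have := hB.isProbabilityMeasure
  have hloss := (hB.hasSubgaussianIncrements hH).isBigO_measureReal_exists_lt_sub (T := t)
    (by positivity) one_pos (fun ω => (hB.cont ω).comp NNReal.continuous_coe) (b := b)
    (by rwa [one_mul, NNReal.coe_rpow])
  refine IsBigO.trans (IsBigO.of_norm_le fun x => ?_) hloss
  rw [norm_of_nonneg measureReal_nonneg]
  refine measureReal_mono fun ω hω => ?_
  obtain ⟨u, v, hu, huv, hvt, hx⟩ := (lt_fbmMaxLoss_iff (hB.cont ω) t.2).1 hω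
  exact ⟨⟨u, hu⟩, huv.trans hvt, ⟨v, hu.trans huv⟩, hvt, hx⟩

end IsFBM

theorem maxLoss_log_tail_asymptotic_general {Ω : Type*} [MeasurableSpace Ω] (P : Measure Ω)
    (H : ℝ) (B : ℝ → Ω → ℝ) (hH : 0 < H) (hB : IsFBM P H B) (t : ℝ) (ht : 0 < t) :
    Tendsto (fun x : ℝ =>
        (1 / x ^ 2) * Real.log ((P {ω | x < fbmMaxLoss B t ω}).toReal))
      atTop (nhds (-(1 / (2 * t ^ (2 * H))))) := by
  lift t to ℝ≥0 using ht.le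
  exact tendsto_log_div_sq_of_isBigO
    (fun _ hb => hB.isBigO_exp_neg_mul_sq_maxLoss hH (NNReal.coe_pos.1 ht) hb)
    (fun _ hb => hB.isBigO_maxLoss_exp_neg_mul_sq hH hb)

theorem maxLoss_log_tail_asymptotic {Ω : Type*} [MeasurableSpace Ω] (P : Measure Ω)
    [IsProbabilityMeasure P] (H : ℝ) (B : ℝ → Ω → ℝ)
    (hH : H ∈ Set.Ico (1/2 : ℝ) 1) (hB : IsFBM P H B) (t : ℝ) (ht : 0 < t) :
    Tendsto (fun x : ℝ =>
        (1 / x ^ 2) * Real.log ((P {ω | x < fbmMaxLoss B t ω}).toReal))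
      atTop (nhds (-(1 / (2 * t ^ (2 * H))))) := by
  exact maxLoss_log_tail_asymptotic_general P H B (one_half_pos.trans_le hH.1) hB t ht
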